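/- QED-consistency is preserved by interleaved QED tests executed according to the specification: let i_1, …, i_n be original instructions and let t = ⟨t_1, …, t_{2n}⟩ be any interleaving of the sequences ⟨i_1, …, i_n⟩ and ⟨D(i_1), …, D(i_n)⟩ (i.e., a merge preserving the relative order within each of the two sequences). Let s_0, …, s_{2n} be states with F(s_{j−1}, t_j, s_j) for every 1 ≤ j ≤ 2n. If s_0 is QED-consistent, then s_{2n} is QED-consistent. -/

import Mathlib

/-- An instruction: an opcode, an output location and two input locations. -/
structure Instr (L Op : Type*) where
  op : Op
  out : L
  in1 : L
  in2 : L

/-- A state: an architectural part `L → V` and a non-architectural part `NS`. -/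
abbrev PState (V L NS : Type*) := (L → V) × NS

/-- The abstract specification relation `F` induced by the family `f` of opcode
specification functions: all non-output locations are preserved and the output
location gets the value specified by the opcode's specification function. -/
def AbsSpec {V L NS Op : Type*} (f : Op → V → V → V)
    (s : PState V L NS) (i : Instr L Op) (s' : PState V L NS) : Prop :=
  (∀ l, l ≠ i.out → s.1 l = s'.1 l) ∧
    s'.1 i.out = f i.op (s.1 i.in1) (s.1 i.in2)

/-- An original instruction: all its locations lie in the set `O` of original locations. -/
def IsOrig {L Op : Type*} (O : Set L) (i : Instr L Op) : Prop :=
  i.out ∈ O ∧ i.in1 ∈ O ∧ i.in2 ∈ O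

/-- A duplicate instruction: all its locations lie in the set `DL` of duplicate locations. -/
def IsDup {L Op : Type*} (DL : Set L) (i : Instr L Op) : Prop :=
  i.out ∈ DL ∧ i.in1 ∈ DL ∧ i.in2 ∈ DL

/-- The instruction duplication function `D` w.r.t. the location correspondence `c`. -/
def dupI {L Op : Type*} (c : L → L) (i : Instr L Op) : Instr L Op :=
  ⟨i.op, c i.out, c i.in1, c i.in2⟩

/-- QED-consistency of a state: every original location holds the same value as
its corresponding duplicate location. -/
def QedCons {V L NS : Type*} (O : Set L) (c : L → L) (s : PState V L NS) : Prop :=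
  ∀ l ∈ O, s.1 l = s.1 (c l)

/-- `Interleave l1 l2 t`: `t` is a merge of `l1` and `l2` preserving the relative
order within each of the two sequences. -/
inductive Interleave {α : Type*} : List α → List α → List α → Prop
  | nil : Interleave [] [] []
  | left {a : α} {l1 l2 t : List α} :
      Interleave l1 l2 t → Interleave (a :: l1) l2 (a :: t)
  | right {a : α} {l1 l2 t : List α} :
      Interleave l1 l2 t → Interleave l1 (a :: l2) (a :: t)

/-- `SpecRun f t s s'`: every instruction of `t`, executed in order starting from
`s` and ending at `s'`, executes according to the specification `AbsSpec f`. -/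
def SpecRun {V L NS Op : Type*} (f : Op → V → V → V) :
    List (Instr L Op) → PState V L NS → PState V L NS → Prop
  | [], s, s'' => s'' = s
  | i :: t, s, s'' => ∃ s', AbsSpec f s i s' ∧ SpecRun f t s' s''

/-!
Run an interleaving on the architectural state. Duplicate instructions never write an original
location and original instructions read only original locations, so on the original locations the
interleaving computes what the original sequence alone computes; symmetrically, on the duplicate
locations it computes what the duplicate sequence alone computes. Started from a QED-consistent
state, the two sequences perform the same computation up to renaming locations along `c`.
-/

theorem IsOrig.isDup_dupI {L Op : Type*} {O DL : Set L} {c : L → L} {i : Instr L Op}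
    (hi : IsOrig O i) (hc : Set.MapsTo c O DL) : IsDup DL (dupI c i) :=
  ⟨hc hi.1, hc hi.2.1, hc hi.2.2⟩

theorem Interleave.symm {α : Type*} {l₁ l₂ t : List α} (h : Interleave l₁ l₂ t) :
    Interleave l₂ l₁ t := by
  induction h with
  | nil => exact .nil
  | left _ ih => exact ih.right
  | right _ ih => exact ih.left

section ArchExec

variable {V L NS Op : Type*} [DecidableEq L] {f : Op → V → V → V}

/-- Execution of a single instruction on an architectural state: the relation `AbsSpec f`, which
determines the architectural part of the successor state, as a function. -/
def archStep (f : Op → V → V → V) (u : L → V) (i : Instr L Op) : L → V :=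
  Function.update u i.out (f i.op (u i.in1) (u i.in2))

/-- Execution of an instruction sequence on an architectural state, used to compare a run of an
interleaving with separate runs of the two interleaved sequences. -/
def archExec (f : Op → V → V → V) (u : L → V) (t : List (Instr L Op)) : L → V :=
  t.foldl (archStep f) u

theorem AbsSpec.fst_eq_archStep {s s' : PState V L NS} {i : Instr L Op} (h : AbsSpec f s i s') :
    s'.1 = archStep f s.1 i :=
  Function.eq_update_iff.2 ⟨h.2, fun l hl => (h.1 l hl).symm⟩

theorem SpecRun.fst_eq_archExec {t : List (Instr L Op)} {s s' : PState V L NS}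
    (h : SpecRun f t s s') : s'.1 = archExec f s.1 t := by
  induction t generalizing s with
  | nil => exact congrArg Prod.fst h
  | cons i t ih =>
    obtain ⟨r, hstep, hrun⟩ := h
    calc s'.1 = archExec f r.1 t := ih hrun
      _ = archExec f s.1 (i :: t) := congrArg (archExec f · t) hstep.fst_eq_archStep

theorem eqOn_archStep_self {S : Set L} {i : Instr L Op} (hout : i.out ∉ S) (u : L → V) :
    Set.EqOn (archStep f u i) u S :=
  fun _ hl => Function.update_of_ne (ne_of_mem_of_not_mem hl hout) _ _

theorem eqOn_archStep {S : Set L} {u v : L → V} {i : Instr L Op} (huv : Set.EqOn u v S)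
    (hin : i.in1 ∈ S ∧ i.in2 ∈ S) : Set.EqOn (archStep f u i) (archStep f v i) S := by
  intro l hl
  by_cases h : l = i.out
  · subst h
    simp only [archStep, Function.update_self, huv hin.1, huv hin.2]
  · simp only [archStep, Function.update_of_ne h, huv hl]

theorem Interleave.eqOn_archExec {S : Set L} {l₁ l₂ t : List (Instr L Op)}
    (h : Interleave l₁ l₂ t) (h₁ : ∀ i ∈ l₁, i.in1 ∈ S ∧ i.in2 ∈ S) (h₂ : ∀ i ∈ l₂, i.out ∉ S)
    {u v : L → V} (huv : Set.EqOn u v S) :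
    Set.EqOn (archExec f u t) (archExec f v l₁) S := by
  induction h generalizing u v with
  | nil => exact huv
  | left _ ih =>
    rw [List.forall_mem_cons] at h₁
    exact ih h₁.2 h₂ (eqOn_archStep huv h₁.1)
  | right _ ih =>
    rw [List.forall_mem_cons] at h₂
    exact ih h₁ h₂.2 ((eqOn_archStep_self h₂.1 u).trans huv)

theorem eqOn_archStep_dupI {O : Set L} {c : L → L} (hc : Set.InjOn c O) {i : Instr L Op}
    (hi : IsOrig O i) {u v : L → V} (huv : Set.EqOn u (v ∘ c) O) :
    Set.EqOn (archStep f u i) (archStep f v (dupI c i) ∘ c) O := by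
  obtain ⟨hout, hin1, hin2⟩ := hi
  intro l hl
  by_cases h : l = i.out
  · subst h
    simp only [archStep, dupI, Function.comp_apply, Function.update_self, huv hin1, huv hin2]
  · have hcl : c l ≠ c i.out := hc.ne hl hout h
    simp only [archStep, dupI, Function.comp_apply, Function.update_of_ne h,
      Function.update_of_ne hcl, huv hl]

theorem eqOn_archExec_map_dupI {O : Set L} {c : L → L} (hc : Set.InjOn c O)
    {a : List (Instr L Op)} (ha : ∀ i ∈ a, IsOrig O i) {u v : L → V}
    (huv : Set.EqOn u (v ∘ c) O) :
    Set.EqOn (archExec f u a) (archExec f v (a.map (dupI c)) ∘ c) O := by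
  induction a generalizing u v with
  | nil => exact huv
  | cons i a ih =>
    rw [List.forall_mem_cons] at ha
    exact ih ha.2 (eqOn_archStep_dupI hc ha.1 huv)

end ArchExec

theorem stmt12_general {V L NS Op : Type*} {f : Op → V → V → V} {O DL : Set L} {c : L → L}
    (hdisj : Disjoint O DL) (hmaps : Set.MapsTo c O DL) (hinj : Set.InjOn c O)
    {a t : List (Instr L Op)} (horig : ∀ i ∈ a, IsOrig O i)
    (hint : Interleave a (a.map (dupI c)) t) {s0 s' : PState V L NS}
    (hrun : SpecRun f t s0 s') (hqed : QedCons O c s0) : QedCons O c s' := by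
  classical
  have hdup : ∀ j ∈ a.map (dupI c), IsDup DL j :=
    List.forall_mem_map.2 fun i hi => (horig i hi).isDup_dupI hmaps
  have hO : Set.EqOn (archExec f s0.1 t) (archExec f s0.1 a) O :=
    hint.eqOn_archExec (fun i hi => (horig i hi).2)
      (fun j hj => hdisj.notMem_of_mem_right (hdup j hj).1) (Set.eqOn_refl _ _)
  have hDL : Set.EqOn (archExec f s0.1 t) (archExec f s0.1 (a.map (dupI c))) DL :=
    hint.symm.eqOn_archExec (fun j hj => (hdup j hj).2)
      (fun i hi => hdisj.notMem_of_mem_left (horig i hi).1) (Set.eqOn_refl _ _)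
  intro l hl
  rw [hrun.fst_eq_archExec]
  calc archExec f s0.1 t l = archExec f s0.1 a l := hO hl
    _ = archExec f s0.1 (a.map (dupI c)) (c l) := eqOn_archExec_map_dupI hinj horig hqed hl
    _ = archExec f s0.1 t (c l) := (hDL (hmaps hl)).symm

/-- QED-consistency is preserved by interleaved QED tests executed according to
the specification: any interleaving of `⟨i_1, …, i_n⟩` with
`⟨D(i_1), …, D(i_n)⟩`, executed according to the specification from a
QED-consistent state, yields a QED-consistent final state. -/
theorem stmt12 {V L NS Op : Type*} (f : Op → V → V → V)
    (O DL : Set L) (c : L → L)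
    (hpart : ∀ l : L, l ∈ O ↔ l ∉ DL) (hbij : Set.BijOn c O DL)
    (a t : List (Instr L Op)) (horig : ∀ i ∈ a, IsOrig O i)
    (hint : Interleave a (a.map (dupI c)) t)
    (s0 s' : PState V L NS)
    (hrun : SpecRun f t s0 s')
    (hqed : QedCons O c s0) :
    QedCons O c s' :=
  stmt12_general (Set.disjoint_left.2 fun l => (hpart l).1) hbij.mapsTo hbij.injOn horig hint hrun
    hqed
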